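/- A pseudo symmetric measure ξ is universally optimal if and only if both of the following hold: (i) Σ_{s∈Q} p_s (c_{s01} + x* c_{s11}) = 0, and (ii) p_s = 0 for every block array s ∉ Q. -/

import Mathlib

open Matrix

namespace TwoDim

/-- The set of plots of an `a × b` block. -/
abbrev Plot (a b : ℕ) := Fin a × Fin b

/-- A block array: an assignment of one of `t` treatments to each plot. -/
abbrev BlockArray (a b t : ℕ) := Plot a b → Fin t

/-- The all-ones matrix. -/
def Jmat (n : Type*) : Matrix n n ℝ := Matrix.of fun _ _ => 1

/-- `B_m = I - J/m`. -/
noncomputable def Bmat (n : Type*) [Fintype n] [DecidableEq n] : Matrix n n ℝ :=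
  1 - ((Fintype.card n : ℝ))⁻¹ • Jmat n

variable {a b t : ℕ}

/-- The treatment incidence matrix `T_s`. -/
def Tmat (s : BlockArray a b t) : Matrix (Plot a b) (Fin t) ℝ :=
  Matrix.of fun q k => if s q = k then 1 else 0

/-- Two plots are neighbors if they agree in one coordinate and differ by 1 in the other. -/
def Neighbor (q r : Plot a b) : Prop :=
  (q.1 = r.1 ∧ (q.2.val + 1 = r.2.val ∨ r.2.val + 1 = q.2.val)) ∨
  (q.2 = r.2 ∧ (q.1.val + 1 = r.1.val ∨ r.1.val + 1 = q.1.val))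

instance (q r : Plot a b) : Decidable (Neighbor q r) := by
  unfold Neighbor; infer_instance

/-- The adjacency matrix of the neighbor relation. -/
def Mmat (a b : ℕ) : Matrix (Plot a b) (Plot a b) ℝ :=
  Matrix.of fun q r => if Neighbor q r then 1 else 0

/-- `F_s = M T_s`. -/
def Fmat (s : BlockArray a b t) : Matrix (Plot a b) (Fin t) ℝ :=
  Mmat a b * Tmat s

/-- `B̃ = Σ⁻¹ − Σ⁻¹ J Σ⁻¹ / (1'Σ⁻¹1)`. -/
noncomputable def Btilde (Sig : Matrix (Plot a b) (Plot a b) ℝ) :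
    Matrix (Plot a b) (Plot a b) ℝ :=
  Sig⁻¹ - (∑ i, ∑ j, Sig⁻¹ i j)⁻¹ • (Sig⁻¹ * Jmat (Plot a b) * Sig⁻¹)

/-- `C_{s00} = T_s' W T_s` (with `W` playing the role of `B̃`). -/
def Cs00 (W : Matrix (Plot a b) (Plot a b) ℝ) (s : BlockArray a b t) :
    Matrix (Fin t) (Fin t) ℝ := (Tmat s)ᵀ * W * Tmat s

/-- `C_{s01} = T_s' W F_s`. -/
def Cs01 (W : Matrix (Plot a b) (Plot a b) ℝ) (s : BlockArray a b t) :
    Matrix (Fin t) (Fin t) ℝ := (Tmat s)ᵀ * W * Fmat s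

/-- `C_{s11} = F_s' W F_s`. -/
def Cs11 (W : Matrix (Plot a b) (Plot a b) ℝ) (s : BlockArray a b t) :
    Matrix (Fin t) (Fin t) ℝ := (Fmat s)ᵀ * W * Fmat s

/-- `c_{s00} = tr(B_t C_{s00})`. -/
noncomputable def cs00 (W : Matrix (Plot a b) (Plot a b) ℝ) (s : BlockArray a b t) : ℝ :=
  Matrix.trace (Bmat (Fin t) * Cs00 W s)

noncomputable def cs01 (W : Matrix (Plot a b) (Plot a b) ℝ) (s : BlockArray a b t) : ℝ :=
  Matrix.trace (Bmat (Fin t) * Cs01 W s)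

noncomputable def cs11 (W : Matrix (Plot a b) (Plot a b) ℝ) (s : BlockArray a b t) : ℝ :=
  Matrix.trace (Bmat (Fin t) * Cs11 W s)

/-- The quadratic `q_s(x) = c_{s00} + 2 c_{s01} x + c_{s11} x²`. -/
noncomputable def qpoly (W : Matrix (Plot a b) (Plot a b) ℝ) (s : BlockArray a b t) (x : ℝ) : ℝ :=
  cs00 W s + 2 * cs01 W s * x + cs11 W s * x ^ 2

/-- A measure on the set of block arrays: nonnegative weights summing to one. -/
def IsMeasure (ξ : BlockArray a b t → ℝ) : Prop :=
  (∀ s, 0 ≤ ξ s) ∧ ∑ s, ξ s = 1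

noncomputable def Cm00 (W : Matrix (Plot a b) (Plot a b) ℝ) (ξ : BlockArray a b t → ℝ) :
    Matrix (Fin t) (Fin t) ℝ := ∑ s, ξ s • Cs00 W s

noncomputable def Cm01 (W : Matrix (Plot a b) (Plot a b) ℝ) (ξ : BlockArray a b t → ℝ) :
    Matrix (Fin t) (Fin t) ℝ := ∑ s, ξ s • Cs01 W s

noncomputable def Cm11 (W : Matrix (Plot a b) (Plot a b) ℝ) (ξ : BlockArray a b t → ℝ) :
    Matrix (Fin t) (Fin t) ℝ := ∑ s, ξ s • Cs11 W s

noncomputable def cm00 (W : Matrix (Plot a b) (Plot a b) ℝ) (ξ : BlockArray a b t → ℝ) : ℝ :=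
  ∑ s, ξ s * cs00 W s

noncomputable def cm01 (W : Matrix (Plot a b) (Plot a b) ℝ) (ξ : BlockArray a b t → ℝ) : ℝ :=
  ∑ s, ξ s * cs01 W s

noncomputable def cm11 (W : Matrix (Plot a b) (Plot a b) ℝ) (ξ : BlockArray a b t → ℝ) : ℝ :=
  ∑ s, ξ s * cs11 W s

/-- `q*_ξ = c_{ξ00} − c_{ξ01}²/c_{ξ11}`. -/
noncomputable def qstar (W : Matrix (Plot a b) (Plot a b) ℝ) (ξ : BlockArray a b t → ℝ) : ℝ :=
  cm00 W ξ - (cm01 W ξ) ^ 2 / cm11 W ξ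

/-- `G` is a generalized inverse of `A`. -/
def IsGenInv (A G : Matrix (Fin t) (Fin t) ℝ) : Prop := A * G * A = A

/-- Information matrix `C_{ξ00} − C_{ξ01} G C_{ξ10}` computed with a generalized inverse `G`. -/
noncomputable def InfoMat (W : Matrix (Plot a b) (Plot a b) ℝ) (ξ : BlockArray a b t → ℝ)
    (G : Matrix (Fin t) (Fin t) ℝ) : Matrix (Fin t) (Fin t) ℝ :=
  Cm00 W ξ - Cm01 W ξ * G * (Cm01 W ξ)ᵀ

/-- A criterion `Φ` on `t×t` real symmetric matrices: concave, Loewner-nondecreasing, and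
invariant under simultaneous permutations of rows and columns. -/
def GoodPhi (t : ℕ) (Φ : Matrix (Fin t) (Fin t) ℝ → ℝ) : Prop :=
  (∀ A B : Matrix (Fin t) (Fin t) ℝ, A.IsSymm → B.IsSymm → ∀ α : ℝ, 0 ≤ α → α ≤ 1 →
      α * Φ A + (1 - α) * Φ B ≤ Φ (α • A + (1 - α) • B)) ∧
  (∀ A B : Matrix (Fin t) (Fin t) ℝ, A.IsSymm → B.IsSymm → (B - A).PosSemidef → Φ A ≤ Φ B) ∧
  (∀ (σ : Equiv.Perm (Fin t)) (C : Matrix (Fin t) (Fin t) ℝ), Φ (C.submatrix σ σ) = Φ C)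

/-- Universal optimality of a measure `ξ`. -/
def UnivOptimal (W : Matrix (Plot a b) (Plot a b) ℝ) (ξ : BlockArray a b t → ℝ) : Prop :=
  ∀ η : BlockArray a b t → ℝ, IsMeasure η →
    ∀ G H : Matrix (Fin t) (Fin t) ℝ, IsGenInv (Cm11 W ξ) G → IsGenInv (Cm11 W η) H →
      ∀ Φ : Matrix (Fin t) (Fin t) ℝ → ℝ, GoodPhi t Φ →
        Φ (InfoMat W η H) ≤ Φ (InfoMat W ξ G)

/-- A measure is symmetric if it is invariant under relabeling of the treatments. -/
def IsSymmetricMeasure (ξ : BlockArray a b t → ℝ) : Prop :=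
  ∀ (σ : Equiv.Perm (Fin t)) (s : BlockArray a b t), ξ (fun q => σ (s q)) = ξ s

/-- A matrix is completely symmetric if it is of the form `αI + βJ`. -/
def ComplSym (A : Matrix (Fin t) (Fin t) ℝ) : Prop :=
  ∃ α β : ℝ, A = α • (1 : Matrix (Fin t) (Fin t) ℝ) + β • Jmat (Fin t)

/-- A measure is pseudo symmetric if `C_{ξ00}`, `C_{ξ01}`, `C_{ξ11}` are completely symmetric. -/
def PseudoSym (W : Matrix (Plot a b) (Plot a b) ℝ) (ξ : BlockArray a b t → ℝ) : Prop :=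
  ComplSym (Cm00 W ξ) ∧ ComplSym (Cm01 W ξ) ∧ ComplSym (Cm11 W ξ)

/-- `r(x) = max_{s∈S} q_s(x)`. -/
noncomputable def rfun {a b : ℕ} (t : ℕ) (W : Matrix (Plot a b) (Plot a b) ℝ) (x : ℝ) : ℝ :=
  sSup (Set.range fun s : BlockArray a b t => qpoly W s x)

/-- `min_{s∈S} q_s(x)`. -/
noncomputable def rmin {a b : ℕ} (t : ℕ) (W : Matrix (Plot a b) (Plot a b) ℝ) (x : ℝ) : ℝ :=
  sInf (Set.range fun s : BlockArray a b t => qpoly W s x)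

/-- Number of plots assigned treatment `k` by `s`. -/
noncomputable def f0 (s : BlockArray a b t) (k : Fin t) : ℕ :=
  {q : Plot a b | s q = k}.ncard

/-- Replications of `k` among the columns `1,…,b−1`. -/
noncomputable def f1 (s : BlockArray a b t) (k : Fin t) : ℕ :=
  {q : Plot a b | s q = k ∧ q.2.val + 1 < b}.ncard

/-- Replications of `k` among the columns `2,…,b`. -/
noncomputable def f2 (s : BlockArray a b t) (k : Fin t) : ℕ :=
  {q : Plot a b | s q = k ∧ 1 ≤ q.2.val}.ncard

/-- Replications of `k` among the rows `1,…,a−1`. -/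
noncomputable def f3 (s : BlockArray a b t) (k : Fin t) : ℕ :=
  {q : Plot a b | s q = k ∧ q.1.val + 1 < a}.ncard

/-- Replications of `k` among the rows `2,…,a`. -/
noncomputable def f4 (s : BlockArray a b t) (k : Fin t) : ℕ :=
  {q : Plot a b | s q = k ∧ 1 ≤ q.1.val}.ncard

noncomputable def fc (s : BlockArray a b t) : ℕ → Fin t → ℕ
  | 0 => f0 s
  | 1 => f1 s
  | 2 => f2 s
  | 3 => f3 s
  | 4 => f4 s
  | _ => fun _ => 0

/-- `h^{uv}_s = Σ_k f^u_{s,k} f^v_{s,k}`. -/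
noncomputable def hval (s : BlockArray a b t) (u v : ℕ) : ℝ :=
  ∑ k : Fin t, (fc s u k : ℝ) * (fc s v k : ℝ)

noncomputable def h00 (s : BlockArray a b t) : ℝ := hval s 0 0

noncomputable def h1 (s : BlockArray a b t) : ℝ :=
  hval s 0 1 + hval s 0 2 + hval s 0 3 + hval s 0 4

noncomputable def h2 (s : BlockArray a b t) : ℝ :=
  hval s 1 1 + hval s 2 2 + hval s 3 3 + hval s 4 4

noncomputable def h3 (s : BlockArray a b t) : ℝ :=
  hval s 1 2 + hval s 1 3 + hval s 1 4 + hval s 2 3 + hval s 2 4 + hval s 3 4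

/-- `z¹_{s,r}`: horizontally adjacent pairs of plots receiving the same treatment. -/
noncomputable def zr1 (s : BlockArray a b t) : ℕ :=
  {qr : Plot a b × Plot a b |
    qr.1.1 = qr.2.1 ∧ qr.1.2.val + 1 = qr.2.2.val ∧ s qr.1 = s qr.2}.ncard

noncomputable def zr2 (s : BlockArray a b t) : ℕ :=
  {qr : Plot a b × Plot a b |
    qr.1.1 = qr.2.1 ∧ qr.1.2.val + 2 = qr.2.2.val ∧ s qr.1 = s qr.2}.ncard

noncomputable def zc1 (s : BlockArray a b t) : ℕ :=
  {qr : Plot a b × Plot a b |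
    qr.1.2 = qr.2.2 ∧ qr.1.1.val + 1 = qr.2.1.val ∧ s qr.1 = s qr.2}.ncard

noncomputable def zc2 (s : BlockArray a b t) : ℕ :=
  {qr : Plot a b × Plot a b |
    qr.1.2 = qr.2.2 ∧ qr.1.1.val + 2 = qr.2.1.val ∧ s qr.1 = s qr.2}.ncard

/-- pairs `(i,j)`, `(i−1,j+1)` with the same treatment. -/
noncomputable def zd1 (s : BlockArray a b t) : ℕ :=
  {qr : Plot a b × Plot a b |
    qr.2.1.val + 1 = qr.1.1.val ∧ qr.1.2.val + 1 = qr.2.2.val ∧ s qr.1 = s qr.2}.ncard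

/-- pairs `(i,j)`, `(i+1,j+1)` with the same treatment. -/
noncomputable def zd2 (s : BlockArray a b t) : ℕ :=
  {qr : Plot a b × Plot a b |
    qr.1.1.val + 1 = qr.2.1.val ∧ qr.1.2.val + 1 = qr.2.2.val ∧ s qr.1 = s qr.2}.ncard

noncomputable def z1 (s : BlockArray a b t) : ℝ := 2 * zr1 s + 2 * zc1 s

noncomputable def z2 (s : BlockArray a b t) : ℝ :=
  2 * zr2 s + 2 * zc2 s + 4 * zd1 s + 4 * zd2 s

/-- `η = 4p − 2a − 2b − 2(8ab − 7a − 7b + 4)/t + 4(2p − a − b)²/(pt)` where `p = ab`. -/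
noncomputable def eta (a b t : ℕ) : ℝ :=
  4 * ((a : ℝ) * b) - 2 * a - 2 * b - 2 * (8 * (a : ℝ) * b - 7 * a - 7 * b + 4) / t +
    4 * (2 * (a : ℝ) * b - a - b) ^ 2 / (((a : ℝ) * b) * t)

/-- A corner plot of the `a × b` block. -/
def IsCorner (q : Plot a b) : Prop :=
  (q.1.val = 0 ∨ q.1.val + 1 = a) ∧ (q.2.val = 0 ∨ q.2.val + 1 = b)

/-- Treatment `k` is significant in `s`: it occupies exactly two plots, which are
neighbors, at least one of them being a corner plot. -/
def Significant (s : BlockArray a b t) (k : Fin t) : Prop :=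
  ∃ u v : Plot a b, u ≠ v ∧ {q : Plot a b | s q = k} = {u, v} ∧
    Neighbor u v ∧ (IsCorner u ∨ IsCorner v)

/-- Treatment `k` is strictly significant in `s`: both of its two plots are corners. -/
def StrictSignificant (s : BlockArray a b t) (k : Fin t) : Prop :=
  ∃ u v : Plot a b, u ≠ v ∧ {q : Plot a b | s q = k} = {u, v} ∧
    Neighbor u v ∧ IsCorner u ∧ IsCorner v

/-- `Q_i`: block arrays with exactly `i` significant treatments in which every other
treatment appears at most once. -/
def Qset (a b t : ℕ) (i : ℕ) : Set (BlockArray a b t) :=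
  {s | {k : Fin t | Significant s k}.ncard = i ∧
       ∀ k : Fin t, ¬ Significant s k → f0 s k ≤ 1}

/-- `Q_j*`: members of `Q_j` whose significant treatments are all strictly significant. -/
def QsetStar (a b t : ℕ) (j : ℕ) : Set (BlockArray a b t) :=
  {s | s ∈ Qset a b t j ∧ ∀ k : Fin t, Significant s k → StrictSignificant s k}

/-- Treatment `k` is connected in `s`. -/
def ConnectedIn (s : BlockArray a b t) (k : Fin t) : Prop :=
  ∀ q r : Plot a b, s q = k → s r = k →
    Relation.ReflTransGen (fun u v => Neighbor u v ∧ s u = k ∧ s v = k) q r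

/-!
For every real `x`, a Schur complement `C₀₀ - C₀₁ G C₁₀` is at most `C₀₀ + x (C₀₁ + C₁₀) + x² C₁₁`
in the Loewner order (complete the square), so the information matrix of a measure `η` has trace at
most `∑ s, η s * q_s x`, which is at most `y*` at `x = x*`. Averaging over permutations of the
treatments cannot decrease a concave permutation-invariant criterion and turns the information
matrix into a multiple of `B_t` with the same trace; hence no criterion exceeds its value at
`(y* / (t - 1)) B_t`. The information matrix of a pseudo symmetric `ξ` is `(q*_ξ / (t - 1)) B_t`.

The bound `y*` is attained. As `x*` minimizes the maximum of the `q_s`, some active `q_s` has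
derivative `≥ 0` at `x*` and some active one has derivative `≤ 0`; a mixture of the two is
stationary at `x*`, and relabeling its treatments in all ways makes it pseudo symmetric.
So a pseudo symmetric `ξ` is universally optimal if and only if `q*_ξ = y*`. Since `q*_ξ` is the
minimum over `x` of `∑ s, ξ s * q_s x`, this says that `ξ` charges only arrays active at `x*` and
that its mean quadratic is stationary there.
-/

section GeneralizedInverse

open scoped ComplexOrder

theorem exists_mul_mul_eq_self {K m n : Type*} [Field K] [Fintype m] [Fintype n]
    (A : Matrix m n K) : ∃ G : Matrix n m K, A * G * A = A := by
  classical
  set f := Matrix.toLin' A with hf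
  obtain ⟨g, hg⟩ := f.rangeRestrict.exists_rightInverse_of_surjective f.range_rangeRestrict
  obtain ⟨h, hh⟩ := g.exists_extend
  have hfhf : f ∘ₗ h ∘ₗ f = f := by
    refine LinearMap.ext fun v => ?_
    have hv : h (f v) = g (f.rangeRestrict v) := LinearMap.congr_fun hh (f.rangeRestrict v)
    simpa [hv] using congrArg Subtype.val (LinearMap.congr_fun hg (f.rangeRestrict v))
  refine ⟨LinearMap.toMatrix' h, Matrix.toLin'.injective ?_⟩
  rw [Matrix.toLin'_mul, Matrix.toLin'_mul, Matrix.toLin'_toMatrix', LinearMap.comp_assoc, ← hf,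
    hfhf]

variable {𝕜 m n : Type*} [Fintype n]

theorem mulVec_eq_zero_of_posSemidef_fromBlocks [Finite m] [RCLike 𝕜] {A : Matrix m m 𝕜}
    {C : Matrix m n 𝕜} {D : Matrix n n 𝕜} (hK : (fromBlocks A C Cᴴ D).PosSemidef) {v : n → 𝕜}
    (hv : D *ᵥ v = 0) : C *ᵥ v = 0 := by
  cases nonempty_fintype m
  have hKv : fromBlocks A C Cᴴ D *ᵥ Sum.elim 0 v = Sum.elim (C *ᵥ v) 0 := by
    simp [fromBlocks_mulVec, hv]
  have hzero : fromBlocks A C Cᴴ D *ᵥ Sum.elim 0 v = 0 := by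
    rw [← hK.dotProduct_mulVec_zero_iff, hKv]
    simp [dotProduct]
  ext i
  simpa [hKv] using congrFun hzero (Sum.inl i)

theorem mul_mul_eq_of_posSemidef_fromBlocks [Finite m] [RCLike 𝕜] {A : Matrix m m 𝕜}
    {C : Matrix m n 𝕜} {D G : Matrix n n 𝕜} (hK : (fromBlocks A C Cᴴ D).PosSemidef)
    (hG : D * G * D = D) : C * G * D = C := by
  classical
  have hCv (v : n → 𝕜) : C *ᵥ (G *ᵥ (D *ᵥ v) - v) = 0 :=
    mulVec_eq_zero_of_posSemidef_fromBlocks hK <| by simp [mulVec_sub, ← Matrix.mul_assoc, hG]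
  refine Matrix.mulVec_injective (funext fun v => ?_)
  simpa [mulVec_sub, sub_eq_zero, ← Matrix.mul_assoc] using hCv v

variable {R : Type*} [CommRing R] [StarRing R] {C : Matrix m n R} {D G : Matrix n n R}

theorem isHermitian_mul_mul_conjTranspose (hD : D.IsHermitian) (hC : C * G * D = C) :
    (C * G * Cᴴ).IsHermitian := by
  have hC' : D * Gᴴ * Cᴴ = Cᴴ := by
    simpa [hD.eq, Matrix.mul_assoc] using congrArg conjTranspose hC
  calc (C * G * Cᴴ)ᴴ = C * G * D * Gᴴ * Cᴴ := by simp [hC, Matrix.mul_assoc]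
    _ = C * G * (D * Gᴴ * Cᴴ) := by simp only [Matrix.mul_assoc]
    _ = C * G * Cᴴ := by rw [hC']

theorem conjTranspose_mul_mul_completion (hD : D.IsHermitian) (hC : C * G * D = C)
    (X : Matrix n m R) :
    (Gᴴ * Cᴴ + X)ᴴ * D * (Gᴴ * Cᴴ + X) = C * G * Cᴴ + C * X + Xᴴ * Cᴴ + Xᴴ * D * X := by
  have hC' : D * Gᴴ * Cᴴ = Cᴴ := by
    simpa [hD.eq, Matrix.mul_assoc] using congrArg conjTranspose hC
  have hsymm : C * Gᴴ * Cᴴ = C * G * Cᴴ := by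
    simpa [Matrix.mul_assoc] using (isHermitian_mul_mul_conjTranspose hD hC).eq
  calc (Gᴴ * Cᴴ + X)ᴴ * D * (Gᴴ * Cᴴ + X)
      = C * G * D * Gᴴ * Cᴴ + C * G * D * X + Xᴴ * (D * Gᴴ * Cᴴ) + Xᴴ * D * X := by
        simp only [conjTranspose_add, conjTranspose_mul, conjTranspose_conjTranspose,
          Matrix.add_mul, Matrix.mul_add, Matrix.mul_assoc]
        abel
    _ = C * G * Cᴴ + C * X + Xᴴ * Cᴴ + Xᴴ * D * X := by rw [hC, hC', hsymm]

theorem posSemidef_sub_schurComplement [Finite m] [RCLike 𝕜] {A : Matrix m m 𝕜}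
    {C : Matrix m n 𝕜} {D G : Matrix n n 𝕜} (hK : (fromBlocks A C Cᴴ D).PosSemidef)
    (hG : D * G * D = D) (X : Matrix n m 𝕜) :
    (A + C * X + Xᴴ * Cᴴ + Xᴴ * D * X - (A - C * G * Cᴴ)).PosSemidef := by
  have hD : D.PosSemidef := hK.submatrix Sum.inr
  have hC := mul_mul_eq_of_posSemidef_fromBlocks hK hG
  convert hD.conjTranspose_mul_mul_same (Gᴴ * Cᴴ + X) using 1
  rw [conjTranspose_mul_mul_completion hD.isHermitian hC]
  abel

end GeneralizedInverse

section Centering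

variable {n : Type*}

theorem Jmat_submatrix_equiv {m : Type*} (e : m ≃ n) : (Jmat n).submatrix e e = Jmat m := rfl

theorem transpose_Jmat : (Jmat n)ᵀ = Jmat n := rfl

variable [Fintype n]

theorem Jmat_mul_mul_Jmat (S : Matrix n n ℝ) :
    Jmat n * S * Jmat n = (∑ i, ∑ j, S i j) • Jmat n := by
  ext i j
  simpa [Matrix.mul_apply, Jmat] using Finset.sum_comm

variable [DecidableEq n]

theorem Bmat_submatrix_equiv {m : Type*} [Fintype m] [DecidableEq m] (e : m ≃ n) :
    (Bmat n).submatrix e e = Bmat m := by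
  simp only [Bmat, submatrix_sub, submatrix_smul, submatrix_one_equiv, Jmat_submatrix_equiv,
    Pi.sub_apply, Pi.smul_apply, Fintype.card_congr e]

theorem transpose_Bmat : (Bmat n)ᵀ = Bmat n := by simp [Bmat, transpose_Jmat]

theorem Bmat_mul_of_Jmat_mul_eq_zero {A : Matrix n n ℝ} (hA : Jmat n * A = 0) :
    Bmat n * A = A := by
  simp [Bmat, sub_mul, hA]

theorem Jmat_mul_Bmat : Jmat n * Bmat n = 0 := by
  cases isEmpty_or_nonempty n
  · exact Subsingleton.elim _ _
  · have hJJ : Jmat n * Jmat n = (Fintype.card n : ℝ) • Jmat n := by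
      simpa [Matrix.one_apply] using Jmat_mul_mul_Jmat (1 : Matrix n n ℝ)
    simp [Bmat, mul_sub, hJJ, smul_smul]

theorem Bmat_mul_Jmat : Bmat n * Jmat n = 0 := by
  simpa [transpose_Bmat, transpose_Jmat] using congrArg transpose (Jmat_mul_Bmat (n := n))

theorem Bmat_mul_Bmat : Bmat n * Bmat n = Bmat n := Bmat_mul_of_Jmat_mul_eq_zero Jmat_mul_Bmat

theorem Bmat_mul_complSym (α β : ℝ) : Bmat n * (α • 1 + β • Jmat n) = α • Bmat n := by
  simp [mul_add, Bmat_mul_Jmat]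

theorem trace_Bmat [Nonempty n] : (Bmat n).trace = Fintype.card n - 1 := by
  simp [Bmat, Jmat, Matrix.trace]

theorem posSemidef_Bmat : (Bmat n).PosSemidef := by
  simpa [conjTranspose_eq_transpose_of_trivial, transpose_Bmat, Bmat_mul_Bmat] using
    posSemidef_conjTranspose_mul_self (Bmat n)

theorem trace_Bmat_mul_nonneg {N : Matrix n n ℝ} (hN : N.PosSemidef) :
    0 ≤ (Bmat n * N).trace := by
  have h := (hN.mul_mul_conjTranspose_same (Bmat n)).trace_nonneg
  rwa [conjTranspose_eq_transpose_of_trivial, transpose_Bmat, trace_mul_comm, ← Matrix.mul_assoc,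
    Bmat_mul_Bmat] at h

theorem trace_Bmat_mul_transpose (A : Matrix n n ℝ) :
    (Bmat n * Aᵀ).trace = (Bmat n * A).trace := by
  rw [← trace_transpose, transpose_mul, transpose_transpose, transpose_Bmat, trace_mul_comm]

-- For `γ = 0` the hypothesis forces `β • B = 0`, in accordance with `β ^ 2 / 0 = 0`.
theorem smul_Bmat_mul_mul_smul_Bmat {β γ δ : ℝ} {G : Matrix n n ℝ}
    (hG : β • Bmat n * G * (γ • 1 + δ • Jmat n) = β • Bmat n) :
    β • Bmat n * G * (β • Bmat n) = (β ^ 2 / γ) • Bmat n := by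
  have hγ : γ • (β • Bmat n * G * Bmat n) = β • Bmat n := by
    have h : β • Bmat n * G * (γ • 1 + δ • Jmat n) * Bmat n = β • Bmat n * Bmat n := by rw [hG]
    rwa [Matrix.mul_assoc _ _ (Bmat n), add_mul, Matrix.smul_mul γ, Matrix.smul_mul δ, one_mul,
      Jmat_mul_Bmat, smul_zero, add_zero, Matrix.mul_smul, Matrix.smul_mul β (Bmat n) (Bmat n),
      Bmat_mul_Bmat] at h
  rcases eq_or_ne γ 0 with rfl | hγ0
  · rw [zero_smul] at hγ
    simp [← hγ]
  · calc β • Bmat n * G * (β • Bmat n) = (β / γ) • γ • (β • Bmat n * G * Bmat n) := by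
          rw [smul_smul, div_mul_cancel₀ β hγ0, Matrix.mul_smul]
      _ = (β ^ 2 / γ) • Bmat n := by rw [hγ, smul_smul]; congr 1; ring

end Centering

section Residual

variable {n : Type*} [Fintype n] {S : Matrix n n ℝ}

theorem Jmat_mul_sub_smul_mul_Jmat_mul [Nonempty n] (hS : S.PosDef) :
    Jmat n * (S - (∑ i, ∑ j, S i j)⁻¹ • (S * Jmat n * S)) = 0 := by
  have hk : 0 < ∑ i, ∑ j, S i j := by
    simpa [dotProduct, mulVec] using hS.dotProduct_mulVec_pos (one_ne_zero (α := n → ℝ))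
  rw [mul_sub, Matrix.mul_smul, ← Matrix.mul_assoc, ← Matrix.mul_assoc, Jmat_mul_mul_Jmat,
    Matrix.smul_mul, inv_smul_smul₀ hk.ne', sub_self]

theorem posSemidef_sub_smul_mul_Jmat_mul (hS : S.PosSemidef) :
    (S - (∑ i, ∑ j, S i j)⁻¹ • (S * Jmat n * S)).PosSemidef := by
  classical
  set k := ∑ i, ∑ j, S i j
  have hST : Sᵀ = S := by simpa [conjTranspose_eq_transpose_of_trivial] using hS.isHermitian.eq
  have hSJS : S * Jmat n * S * Jmat n * S = k • (S * Jmat n * S) :=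
    calc S * Jmat n * S * Jmat n * S = S * (Jmat n * S * Jmat n) * S := by
          simp only [Matrix.mul_assoc]
      _ = k • (S * Jmat n * S) := by rw [Jmat_mul_mul_Jmat, Matrix.mul_smul, Matrix.smul_mul]
  convert hS.conjTranspose_mul_mul_same (1 - k⁻¹ • (Jmat n * S)) using 1
  have hk : k⁻¹ * (k⁻¹ * k) = k⁻¹ := by grind
  simp only [conjTranspose_eq_transpose_of_trivial, transpose_sub, transpose_one, transpose_smul,
    transpose_mul, hST, transpose_Jmat, sub_mul, mul_sub, one_mul, mul_one, Matrix.smul_mul,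
    Matrix.mul_smul, ← Matrix.mul_assoc, hSJS, smul_smul, hk]
  abel

end Residual

section PermutationAverage

variable {n : Type*} [Fintype n] [DecidableEq n]

/-- The average of `A` over all simultaneous permutations of its rows and columns. It is
completely symmetric and, by Jensen's inequality, no worse than a symmetric `A` under any optimality
criterion. -/
noncomputable def permAvg (A : Matrix n n ℝ) : Matrix n n ℝ :=
  ∑ σ : Equiv.Perm n, (Fintype.card (Equiv.Perm n) : ℝ)⁻¹ • A.submatrix σ σ

theorem permAvg_submatrix (A : Matrix n n ℝ) (τ : Equiv.Perm n) :
    (permAvg A).submatrix τ τ = permAvg A := by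
  ext i j
  simp only [permAvg, submatrix_apply, Matrix.sum_apply, Matrix.smul_apply]
  exact Equiv.sum_comp (Equiv.mulRight τ) fun σ =>
    (Fintype.card (Equiv.Perm n) : ℝ)⁻¹ • A (σ i) (σ j)

theorem permAvg_zero : permAvg (0 : Matrix n n ℝ) = 0 := by simp [permAvg]

theorem mul_permAvg {P : Matrix n n ℝ} (hP : ∀ σ : Equiv.Perm n, P.submatrix σ σ = P)
    (A : Matrix n n ℝ) : P * permAvg A = permAvg (P * A) := by
  simp only [permAvg, Matrix.mul_sum, Matrix.mul_smul]
  refine Finset.sum_congr rfl fun σ _ => ?_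
  rw [← submatrix_mul_equiv P A σ σ σ, hP]

theorem trace_permAvg (A : Matrix n n ℝ) : (permAvg A).trace = A.trace := by
  have htrace (σ : Equiv.Perm n) : (A.submatrix σ σ).trace = A.trace :=
    Equiv.sum_comp σ fun i => A i i
  simp [permAvg, trace_sum, htrace]

end PermutationAverage

section CompletelySymmetric

theorem natCast_sub_one_pos [Nontrivial (Fin t)] : (0 : ℝ) < t - 1 := by
  rw [sub_pos, Nat.one_lt_cast]
  exact Fin.nontrivial_iff_two_le.mp ‹_›

theorem complSym_of_submatrix_perm_eq [Nontrivial (Fin t)] {A : Matrix (Fin t) (Fin t) ℝ}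
    (hA : ∀ σ : Equiv.Perm (Fin t), A.submatrix σ σ = A) : ComplSym A := by
  obtain ⟨i₀, j₀, hij₀⟩ := exists_pair_ne (Fin t)
  have htrans (i j k l : Fin t) (hij : i ≠ j) (hkl : k ≠ l) : A i j = A k l := by
    obtain ⟨σ, rfl, rfl⟩ := MulAction.is_two_pretransitive_iff.mp
      (Equiv.Perm.isMultiplyPretransitive (Fin t) 2) hij hkl
    exact (congrFun₂ (hA σ) i j).symm
  have hdiag (i : Fin t) : A i i = A i₀ i₀ := by
    simpa using congrFun₂ (hA (Equiv.swap i i₀)) i₀ i₀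
  refine ⟨A i₀ i₀ - A i₀ j₀, A i₀ j₀, ?_⟩
  ext i j
  rcases eq_or_ne i j with rfl | hij
  · simp [Jmat, hdiag]
  · simp [Jmat, hij, htrans i j i₀ j₀ hij hij₀]

theorem complSym_permAvg [Nontrivial (Fin t)] (A : Matrix (Fin t) (Fin t) ℝ) :
    ComplSym (permAvg A) :=
  complSym_of_submatrix_perm_eq (permAvg_submatrix A)

theorem ComplSym.eq_smul_Bmat [Nontrivial (Fin t)] {A : Matrix (Fin t) (Fin t) ℝ}
    (hA : ComplSym A) (hJA : Jmat (Fin t) * A = 0) :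
    A = ((Bmat (Fin t) * A).trace / (t - 1)) • Bmat (Fin t) := by
  obtain ⟨α, β, rfl⟩ := hA
  rw [Bmat_mul_complSym, trace_smul, trace_Bmat, Fintype.card_fin, smul_eq_mul,
    mul_div_cancel_right₀ α natCast_sub_one_pos.ne', ← Bmat_mul_complSym α β,
    Bmat_mul_of_Jmat_mul_eq_zero hJA]

theorem permAvg_eq_smul_Bmat [Nontrivial (Fin t)] {A : Matrix (Fin t) (Fin t) ℝ}
    (hJA : Jmat (Fin t) * A = 0) : permAvg A = (A.trace / (t - 1)) • Bmat (Fin t) := by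
  have hJ : Jmat (Fin t) * permAvg A = 0 := by
    rw [mul_permAvg (fun σ => Jmat_submatrix_equiv σ), hJA, permAvg_zero]
  have h := (complSym_permAvg A).eq_smul_Bmat hJ
  rwa [Bmat_mul_of_Jmat_mul_eq_zero hJ, trace_permAvg] at h

end CompletelySymmetric

section Criteria

theorem goodPhi_trace : GoodPhi t Matrix.trace :=
  ⟨fun A B _ _ α _ _ => by simp,
    fun A B _ _ h => sub_nonneg.mp (by simpa using h.trace_nonneg),
    fun σ C => Equiv.sum_comp σ fun i => C i i⟩

variable {Φ : Matrix (Fin t) (Fin t) ℝ → ℝ}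

theorem GoodPhi.concaveOn (hΦ : GoodPhi t Φ) :
    ConcaveOn ℝ {A : Matrix (Fin t) (Fin t) ℝ | A.IsSymm} Φ := by
  refine ⟨fun A hA B hB u v _ _ _ => (hA.smul u).add (hB.smul v),
    fun A hA B hB u v hu hv huv => ?_⟩
  obtain rfl : v = 1 - u := by linarith
  exact hΦ.1 A B hA hB u hu (by linarith)

theorem GoodPhi.le_permAvg (hΦ : GoodPhi t Φ) {A : Matrix (Fin t) (Fin t) ℝ} (hA : A.IsSymm) :
    Φ A ≤ Φ (permAvg A) :=
  calc Φ A = ∑ σ : Equiv.Perm (Fin t),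
        (Fintype.card (Equiv.Perm (Fin t)) : ℝ)⁻¹ • Φ (A.submatrix σ σ) := by simp [hΦ.2.2]
    _ ≤ Φ (permAvg A) := hΦ.concaveOn.le_map_sum (fun _ _ => by positivity) (by simp)
      fun σ _ => hA.submatrix σ

end Criteria

section Minimax

open Filter Set Topology

variable {S X : Type*}

/-- `M` is the minimax value of the family `f`, attained at `x`: the maximum over `s` of `f s z` is
at least `M` for every `z`, and no `f s x` exceeds `M`. -/
def IsMinimax (f : S → X → ℝ) (x : X) (M : ℝ) : Prop :=
  (∀ s, f s x ≤ M) ∧ ∀ z, ∃ s, M ≤ f s z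

theorem isMinimax_sSup_range [Finite S] [Nonempty S] {f : S → X → ℝ} {x : X}
    (hx : ∀ z, sSup (range fun s => f s x) ≤ sSup (range fun s => f s z)) :
    IsMinimax f x (sSup (range fun s => f s x)) := by
  refine ⟨fun s => le_csSup (finite_range _).bddAbove ⟨s, rfl⟩, fun z => ?_⟩
  obtain ⟨s, hs⟩ := (range_nonempty fun s => f s z).csSup_mem (finite_range _)
  exact ⟨s, (hx z).trans hs.ge⟩

theorem IsMinimax.comp_neg {f : S → ℝ → ℝ} {x M : ℝ} (h : IsMinimax f x M) :
    IsMinimax (fun s z => f s (-z)) (-x) M :=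
  ⟨by simpa using h.1, fun z => h.2 (-z)⟩

theorem eventually_lt_of_hasDerivAt_neg {f : ℝ → ℝ} {f' x : ℝ} (hf : HasDerivAt f f' x)
    (hf' : f' < 0) : ∀ᶠ z in 𝓝[>] x, f z < f x := by
  filter_upwards [hf.hasDerivWithinAt.limsup_slope_le' self_notMem_Ioi hf', self_mem_nhdsWithin]
    with z hslope hz
  rw [slope_def_field, div_neg_iff] at hslope
  have : 0 < z - x := sub_pos.mpr hz
  grind

theorem IsMinimax.exists_eq_and_nonneg_deriv [Finite S] {f : S → ℝ → ℝ} {f' : S → ℝ} {x M : ℝ}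
    (h : IsMinimax f x M) (hf : ∀ s, HasDerivAt (f s) (f' s) x) :
    ∃ s, f s x = M ∧ 0 ≤ f' s := by
  by_contra! hneg
  have hlt : ∀ᶠ z in 𝓝[>] x, ∀ s, f s z < M := by
    refine eventually_all.mpr fun s => ?_
    rcases (h.1 s).lt_or_eq with hs | hs
    · exact ((hf s).continuousAt.eventually_lt_const hs).filter_mono nhdsWithin_le_nhds
    · exact hs ▸ eventually_lt_of_hasDerivAt_neg (hf s) (hneg s hs)
  obtain ⟨z, hz⟩ := hlt.exists
  obtain ⟨s, hs⟩ := h.2 z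
  exact (hz s).not_ge hs

theorem IsMinimax.exists_mem_stdSimplex [Fintype S] {f : S → ℝ → ℝ} {f' : S → ℝ}
    {x M : ℝ} (h : IsMinimax f x M) (hf : ∀ s, HasDerivAt (f s) (f' s) x) :
    ∃ w ∈ stdSimplex ℝ S, (∀ s, f s x ≠ M → w s = 0) ∧ ∑ s, w s * f' s = 0 := by
  classical
  obtain ⟨s₁, hs₁, hf'₁⟩ := h.exists_eq_and_nonneg_deriv hf
  obtain ⟨s₂, hs₂, hf'₂⟩ := h.comp_neg.exists_eq_and_nonneg_deriv (f' := -f') fun s => by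
    simpa [Function.comp_def] using (hf s).comp_of_eq (-x) (hasDerivAt_neg (-x)) (neg_neg x).symm
  rw [neg_neg] at hs₂
  rw [Pi.neg_apply, neg_nonneg] at hf'₂
  obtain ⟨α, β, hα, hβ, hαβ, hcomb⟩ : (0 : ℝ) ∈ segment ℝ (f' s₁) (f' s₂) := by
    rw [segment_symm, segment_eq_Icc (hf'₂.trans hf'₁)]
    exact ⟨hf'₂, hf'₁⟩
  refine ⟨α • Pi.single s₁ 1 + β • Pi.single s₂ 1, convex_stdSimplex ℝ S
    (single_mem_stdSimplex ℝ s₁) (single_mem_stdSimplex ℝ s₂) hα hβ hαβ, fun s hs => ?_, ?_⟩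
  · have hne₁ : s ≠ s₁ := by rintro rfl; exact hs hs₁
    have hne₂ : s ≠ s₂ := by rintro rfl; exact hs hs₂
    simp [hne₁, hne₂]
  · simpa [add_mul, Finset.sum_add_distrib, Pi.single_apply] using hcomb

variable [Fintype S] {w g : S → ℝ} {M : ℝ}

theorem sum_mul_const_of_mem_stdSimplex (hw : w ∈ stdSimplex ℝ S) : ∑ s, w s * M = M := by
  rw [← Finset.sum_mul, hw.2, one_mul]

theorem sum_mul_le_of_mem_stdSimplex (hw : w ∈ stdSimplex ℝ S) (hg : ∀ s, g s ≤ M) :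
    ∑ s, w s * g s ≤ M :=
  calc ∑ s, w s * g s ≤ ∑ s, w s * M :=
        Finset.sum_le_sum fun s _ => mul_le_mul_of_nonneg_left (hg s) (hw.1 s)
    _ = M := sum_mul_const_of_mem_stdSimplex hw

theorem sum_mul_eq_iff_of_mem_stdSimplex (hw : w ∈ stdSimplex ℝ S) (hg : ∀ s, g s ≤ M) :
    ∑ s, w s * g s = M ↔ ∀ s, g s ≠ M → w s = 0 := by
  conv_lhs => rhs; rw [← sum_mul_const_of_mem_stdSimplex (M := M) hw]
  rw [Finset.sum_eq_sum_iff_of_le fun s _ => mul_le_mul_of_nonneg_left (hg s) (hw.1 s)]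
  simp [mul_eq_mul_left_iff, or_iff_not_imp_left]

end Minimax

section Quadratic

variable {c₀ c₁ c₂ x : ℝ}

theorem hasDerivAt_quadratic (c₀ c₁ c₂ x : ℝ) :
    HasDerivAt (fun z => c₀ + 2 * c₁ * z + c₂ * z ^ 2) (2 * (c₁ + x * c₂)) x := by
  refine ((((hasDerivAt_id' x).const_mul (2 * c₁)).const_add c₀).fun_add
    ((hasDerivAt_pow 2 x).const_mul c₂)).congr_deriv ?_
  push_cast
  ring

theorem add_mul_eq_zero_of_forall_quadratic_le
    (hx : ∀ z, c₀ + 2 * c₁ * x + c₂ * x ^ 2 ≤ c₀ + 2 * c₁ * z + c₂ * z ^ 2) :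
    c₁ + x * c₂ = 0 := by
  have hmin : IsLocalMin (fun z => c₀ + 2 * c₁ * z + c₂ * z ^ 2) x := .of_forall hx
  simpa using hmin.hasDerivAt_eq_zero (hasDerivAt_quadratic c₀ c₁ c₂ x)

theorem sub_sq_div_eq_quadratic (hx : c₁ + x * c₂ = 0) :
    c₀ - c₁ ^ 2 / c₂ = c₀ + 2 * c₁ * x + c₂ * x ^ 2 := by
  obtain rfl : c₁ = -(x * c₂) := eq_neg_of_add_eq_zero_left hx
  rcases eq_or_ne c₂ 0 with rfl | hc₂
  · simp
  · field_simp [hc₂]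
    ring

end Quadratic

section Measures

variable {W : Matrix (Plot a b) (Plot a b) ℝ} {ξ : BlockArray a b t → ℝ}

/-- The average `∑ s, p_s q_s(x)` of the quadratics `q_s` under the measure `ξ`. -/
noncomputable def qmean (W : Matrix (Plot a b) (Plot a b) ℝ) (ξ : BlockArray a b t → ℝ) (x : ℝ) :
    ℝ :=
  ∑ s, ξ s * qpoly W s x

theorem qmean_eq (W : Matrix (Plot a b) (Plot a b) ℝ) (ξ : BlockArray a b t → ℝ) (x : ℝ) :
    qmean W ξ x = cm00 W ξ + 2 * cm01 W ξ * x + cm11 W ξ * x ^ 2 := by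
  simp only [qmean, qpoly, cm00, cm01, cm11, Finset.mul_sum, Finset.sum_mul,
    ← Finset.sum_add_distrib]
  exact Finset.sum_congr rfl fun s _ => by ring

theorem qmean_eq_qstar {x : ℝ} (hx : cm01 W ξ + x * cm11 W ξ = 0) : qmean W ξ x = qstar W ξ := by
  rw [qmean_eq, qstar, sub_sq_div_eq_quadratic hx]

theorem trace_Bmat_mul_sum_smul {S : Type*} [Fintype S] (w : S → ℝ)
    (C : S → Matrix (Fin t) (Fin t) ℝ) :
    (Bmat (Fin t) * ∑ s, w s • C s).trace = ∑ s, w s * (Bmat (Fin t) * C s).trace := by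
  simp [Matrix.mul_sum, trace_sum]

theorem trace_Bmat_mul_Cm00 (W : Matrix (Plot a b) (Plot a b) ℝ) (ξ : BlockArray a b t → ℝ) :
    (Bmat (Fin t) * Cm00 W ξ).trace = cm00 W ξ :=
  trace_Bmat_mul_sum_smul ξ (Cs00 W)

theorem trace_Bmat_mul_Cm01 (W : Matrix (Plot a b) (Plot a b) ℝ) (ξ : BlockArray a b t → ℝ) :
    (Bmat (Fin t) * Cm01 W ξ).trace = cm01 W ξ :=
  trace_Bmat_mul_sum_smul ξ (Cs01 W)

theorem trace_Bmat_mul_Cm11 (W : Matrix (Plot a b) (Plot a b) ℝ) (ξ : BlockArray a b t → ℝ) :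
    (Bmat (Fin t) * Cm11 W ξ).trace = cm11 W ξ :=
  trace_Bmat_mul_sum_smul ξ (Cs11 W)

theorem posSemidef_fromBlocks_Cs (hW : W.PosSemidef) (s : BlockArray a b t) :
    (fromBlocks (Cs00 W s) (Cs01 W s) (Cs01 W s)ᴴ (Cs11 W s)).PosSemidef := by
  have hWT : Wᵀ = W := by simpa [conjTranspose_eq_transpose_of_trivial] using hW.isHermitian.eq
  convert hW.conjTranspose_mul_mul_same (fromCols (Tmat s) (Fmat s)) using 1
  simp [Cs00, Cs01, Cs11, conjTranspose_eq_transpose_of_trivial, transpose_fromCols,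
    fromRows_mul, mul_fromCols, fromBlocks, hWT, Matrix.mul_assoc]

theorem posSemidef_fromBlocks_Cm (hW : W.PosSemidef) (hξ : IsMeasure ξ) :
    (fromBlocks (Cm00 W ξ) (Cm01 W ξ) (Cm01 W ξ)ᴴ (Cm11 W ξ)).PosSemidef := by
  have hsum : fromBlocks (Cm00 W ξ) (Cm01 W ξ) (Cm01 W ξ)ᴴ (Cm11 W ξ) =
      ∑ s, ξ s • fromBlocks (Cs00 W s) (Cs01 W s) (Cs01 W s)ᴴ (Cs11 W s) := by
    ext (i | i) (j | j) <;>
      simp [Cm00, Cm01, Cm11, Matrix.sum_apply]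
  rw [hsum]
  exact posSemidef_sum _ fun s _ => (posSemidef_fromBlocks_Cs hW s).smul (hξ.1 s)

theorem Jmat_mul_transpose_Tmat_mul (hJW : Jmat (Plot a b) * W = 0) (s : BlockArray a b t) :
    Jmat (Fin t) * (Tmat s)ᵀ * W = 0 := by
  have hT : Jmat (Fin t) * (Tmat s)ᵀ = Matrix.of fun _ _ => 1 := by
    ext i q
    simp [Matrix.mul_apply, Jmat, Tmat]
  rw [hT]
  ext i q
  simpa [Matrix.mul_apply, Jmat] using congrFun₂ hJW q q

theorem Jmat_mul_Cm00 (hJW : Jmat (Plot a b) * W = 0) (ξ : BlockArray a b t → ℝ) :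
    Jmat (Fin t) * Cm00 W ξ = 0 := by
  simp [Cm00, Cs00, Matrix.mul_sum, ← Matrix.mul_assoc,
    Jmat_mul_transpose_Tmat_mul hJW]

theorem Jmat_mul_Cm01 (hJW : Jmat (Plot a b) * W = 0) (ξ : BlockArray a b t → ℝ) :
    Jmat (Fin t) * Cm01 W ξ = 0 := by
  simp [Cm01, Cs01, Matrix.mul_sum, ← Matrix.mul_assoc,
    Jmat_mul_transpose_Tmat_mul hJW]

theorem Jmat_mul_infoMat (hJW : Jmat (Plot a b) * W = 0) (ξ : BlockArray a b t → ℝ)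
    (G : Matrix (Fin t) (Fin t) ℝ) : Jmat (Fin t) * InfoMat W ξ G = 0 := by
  simp [InfoMat, mul_sub, ← Matrix.mul_assoc, Jmat_mul_Cm00 hJW, Jmat_mul_Cm01 hJW]

variable {G : Matrix (Fin t) (Fin t) ℝ}

theorem isSymm_infoMat (hW : W.PosSemidef) (hξ : IsMeasure ξ) (hG : IsGenInv (Cm11 W ξ) G) :
    (InfoMat W ξ G).IsSymm := by
  have hK := posSemidef_fromBlocks_Cm hW hξ
  exact (hK.submatrix Sum.inl).isHermitian.sub <| isHermitian_mul_mul_conjTranspose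
    (hK.submatrix Sum.inr).isHermitian (mul_mul_eq_of_posSemidef_fromBlocks hK hG)

theorem trace_infoMat_le_qmean (hW : W.PosSemidef) (hJW : Jmat (Plot a b) * W = 0)
    (hξ : IsMeasure ξ) (hG : IsGenInv (Cm11 W ξ) G) (x : ℝ) :
    (InfoMat W ξ G).trace ≤ qmean W ξ x := by
  have hinfo : (Bmat (Fin t) * (Cm00 W ξ - Cm01 W ξ * G * (Cm01 W ξ)ᴴ)).trace =
      (InfoMat W ξ G).trace :=
    congrArg Matrix.trace (Bmat_mul_of_Jmat_mul_eq_zero (Jmat_mul_infoMat hJW ξ G))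
  have h := trace_Bmat_mul_nonneg
    (posSemidef_sub_schurComplement (posSemidef_fromBlocks_Cm hW hξ) hG (x • 1))
  rw [mul_sub, trace_sub, hinfo, sub_nonneg] at h
  refine h.trans_eq ?_
  simp only [Matrix.mul_smul, Matrix.mul_one, conjTranspose_eq_transpose_of_trivial,
    transpose_smul, transpose_one, Matrix.smul_mul, Matrix.one_mul, Matrix.mul_add, trace_add,
    trace_smul, smul_eq_mul, trace_Bmat_mul_transpose, trace_Bmat_mul_Cm00, trace_Bmat_mul_Cm01,
    trace_Bmat_mul_Cm11, qmean_eq]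
  ring

variable [Nontrivial (Fin t)]

theorem infoMat_eq_of_pseudoSym (hW : W.PosSemidef) (hJW : Jmat (Plot a b) * W = 0)
    (hξ : IsMeasure ξ) (hps : PseudoSym W ξ) (hG : IsGenInv (Cm11 W ξ) G) :
    InfoMat W ξ G = (qstar W ξ / (t - 1)) • Bmat (Fin t) := by
  have h00 : Cm00 W ξ = (cm00 W ξ / (t - 1)) • Bmat (Fin t) := by
    rw [← trace_Bmat_mul_Cm00]
    exact hps.1.eq_smul_Bmat (Jmat_mul_Cm00 hJW ξ)
  have h01 : Cm01 W ξ = (cm01 W ξ / (t - 1)) • Bmat (Fin t) := by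
    rw [← trace_Bmat_mul_Cm01]
    exact hps.2.1.eq_smul_Bmat (Jmat_mul_Cm01 hJW ξ)
  obtain ⟨γ, δ, h11⟩ := hps.2.2
  have hcm11 : cm11 W ξ = γ * (t - 1) := by
    rw [← trace_Bmat_mul_Cm11, h11, Bmat_mul_complSym, trace_smul, trace_Bmat, Fintype.card_fin,
      smul_eq_mul]
  have hC := mul_mul_eq_of_posSemidef_fromBlocks (posSemidef_fromBlocks_Cm hW hξ) hG
  rw [h01, h11] at hC
  rw [InfoMat, h00, h01, transpose_smul, transpose_Bmat, smul_Bmat_mul_mul_smul_Bmat hC, ← sub_smul,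
    qstar, hcm11]
  congr 1
  simp only [div_eq_mul_inv, mul_inv, mul_pow]
  ring

theorem trace_infoMat_of_pseudoSym (hW : W.PosSemidef) (hJW : Jmat (Plot a b) * W = 0)
    (hξ : IsMeasure ξ) (hps : PseudoSym W ξ) (hG : IsGenInv (Cm11 W ξ) G) :
    (InfoMat W ξ G).trace = qstar W ξ := by
  rw [infoMat_eq_of_pseudoSym hW hJW hξ hps hG, trace_smul, trace_Bmat, Fintype.card_fin,
    smul_eq_mul, div_mul_cancel₀ _ natCast_sub_one_pos.ne']

theorem qstar_le_qmean (hW : W.PosSemidef) (hJW : Jmat (Plot a b) * W = 0) (hξ : IsMeasure ξ)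
    (hps : PseudoSym W ξ) (x : ℝ) : qstar W ξ ≤ qmean W ξ x := by
  obtain ⟨G, hG⟩ := exists_mul_mul_eq_self (Cm11 W ξ)
  rw [← trace_infoMat_of_pseudoSym hW hJW hξ hps hG]
  exact trace_infoMat_le_qmean hW hJW hξ hG x

end Measures

section Symmetrization

variable {W : Matrix (Plot a b) (Plot a b) ℝ}

theorem Tmat_comp_submatrix (s : BlockArray a b t) (σ : Equiv.Perm (Fin t)) :
    (Tmat (σ ∘ s)).submatrix id σ = Tmat s := by
  ext q k
  simp [Tmat]

theorem Fmat_comp_submatrix (s : BlockArray a b t) (σ : Equiv.Perm (Fin t)) :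
    (Fmat (σ ∘ s)).submatrix id σ = Fmat s :=
  congrArg (Mmat a b * ·) (Tmat_comp_submatrix s σ)

theorem Cs00_comp_submatrix (W : Matrix (Plot a b) (Plot a b) ℝ) (s : BlockArray a b t)
    (σ : Equiv.Perm (Fin t)) : (Cs00 W (σ ∘ s)).submatrix σ σ = Cs00 W s := by
  conv_rhs => rw [Cs00, ← Tmat_comp_submatrix s σ]
  rfl

theorem Cs01_comp_submatrix (W : Matrix (Plot a b) (Plot a b) ℝ) (s : BlockArray a b t)
    (σ : Equiv.Perm (Fin t)) : (Cs01 W (σ ∘ s)).submatrix σ σ = Cs01 W s := by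
  conv_rhs => rw [Cs01, ← Tmat_comp_submatrix s σ, ← Fmat_comp_submatrix s σ]
  rfl

theorem Cs11_comp_submatrix (W : Matrix (Plot a b) (Plot a b) ℝ) (s : BlockArray a b t)
    (σ : Equiv.Perm (Fin t)) : (Cs11 W (σ ∘ s)).submatrix σ σ = Cs11 W s := by
  conv_rhs => rw [Cs11, ← Fmat_comp_submatrix s σ]
  rfl

/-- The average of the measure `η` over all relabelings of the treatments. -/
noncomputable def symmetrize (η : BlockArray a b t → ℝ) (s : BlockArray a b t) : ℝ :=
  ∑ σ : Equiv.Perm (Fin t), (Fintype.card (Equiv.Perm (Fin t)) : ℝ)⁻¹ * η (σ ∘ s)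

theorem sum_perm_comp {E : Type*} [AddCommMonoid E] (g : BlockArray a b t → E)
    (σ : Equiv.Perm (Fin t)) : ∑ s, g (σ ∘ s) = ∑ s, g s :=
  ((Equiv.refl (Plot a b)).arrowCongr σ).sum_comp g

theorem IsMeasure.symmetrize {η : BlockArray a b t → ℝ} (hη : IsMeasure η) :
    IsMeasure (symmetrize η) := by
  refine ⟨fun s => Finset.sum_nonneg fun σ _ => mul_nonneg (by positivity) (hη.1 _), ?_⟩
  simp only [TwoDim.symmetrize]
  rw [Finset.sum_comm]
  simp [← Finset.mul_sum, sum_perm_comp, hη.2]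

theorem sum_symmetrize_smul (η : BlockArray a b t → ℝ)
    {C : BlockArray a b t → Matrix (Fin t) (Fin t) ℝ}
    (hC : ∀ s (σ : Equiv.Perm (Fin t)), (C (σ ∘ s)).submatrix σ σ = C s) :
    ∑ s, symmetrize η s • C s = permAvg (∑ s, η s • C s) := by
  have hσ (σ : Equiv.Perm (Fin t)) :
      ∑ s, η (σ ∘ s) • C s = (∑ s, η s • C s).submatrix σ σ :=
    calc ∑ s, η (σ ∘ s) • C s = ∑ s, η (σ ∘ s) • (C (σ ∘ s)).submatrix σ σ := by simp only [hC]
      _ = ∑ s, η s • (C s).submatrix σ σ :=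
        sum_perm_comp (fun s => η s • (C s).submatrix σ σ) σ
      _ = (∑ s, η s • C s).submatrix σ σ := by ext i j; simp [Matrix.sum_apply]
  simp only [symmetrize, permAvg, Finset.sum_smul, mul_smul, ← hσ, Finset.smul_sum]
  exact Finset.sum_comm

theorem Cm00_symmetrize (W : Matrix (Plot a b) (Plot a b) ℝ) (η : BlockArray a b t → ℝ) :
    Cm00 W (symmetrize η) = permAvg (Cm00 W η) :=
  sum_symmetrize_smul η (Cs00_comp_submatrix W)

theorem Cm01_symmetrize (W : Matrix (Plot a b) (Plot a b) ℝ) (η : BlockArray a b t → ℝ) :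
    Cm01 W (symmetrize η) = permAvg (Cm01 W η) :=
  sum_symmetrize_smul η (Cs01_comp_submatrix W)

theorem Cm11_symmetrize (W : Matrix (Plot a b) (Plot a b) ℝ) (η : BlockArray a b t → ℝ) :
    Cm11 W (symmetrize η) = permAvg (Cm11 W η) :=
  sum_symmetrize_smul η (Cs11_comp_submatrix W)

theorem pseudoSym_symmetrize [Nontrivial (Fin t)] (W : Matrix (Plot a b) (Plot a b) ℝ)
    (η : BlockArray a b t → ℝ) : PseudoSym W (symmetrize η) := by
  rw [PseudoSym, Cm00_symmetrize, Cm01_symmetrize, Cm11_symmetrize]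
  exact ⟨complSym_permAvg _, complSym_permAvg _, complSym_permAvg _⟩

theorem trace_Bmat_mul_permAvg (A : Matrix (Fin t) (Fin t) ℝ) :
    (Bmat (Fin t) * permAvg A).trace = (Bmat (Fin t) * A).trace := by
  rw [mul_permAvg fun σ => Bmat_submatrix_equiv σ, trace_permAvg]

theorem qstar_symmetrize (W : Matrix (Plot a b) (Plot a b) ℝ) (η : BlockArray a b t → ℝ) :
    qstar W (symmetrize η) = qstar W η := by
  simp only [qstar, ← trace_Bmat_mul_Cm00, ← trace_Bmat_mul_Cm01, ← trace_Bmat_mul_Cm11,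
    Cm00_symmetrize, Cm01_symmetrize, Cm11_symmetrize, trace_Bmat_mul_permAvg]

end Symmetrization

section Optimality

variable {W : Matrix (Plot a b) (Plot a b) ℝ} {ξ η : BlockArray a b t → ℝ} {x y : ℝ}

theorem qmean_le (hmm : IsMinimax (qpoly (t := t) W) x y) (hη : IsMeasure η) : qmean W η x ≤ y :=
  sum_mul_le_of_mem_stdSimplex hη hmm.1

theorem exists_qstar_eq (hmm : IsMinimax (qpoly (t := t) W) x y) :
    ∃ η : BlockArray a b t → ℝ, IsMeasure η ∧ qstar W η = y := by
  obtain ⟨η, hη, hsupp, hderiv⟩ := hmm.exists_mem_stdSimplex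
    fun s => hasDerivAt_quadratic (cs00 W s) (cs01 W s) (cs11 W s) x
  have hstat : cm01 W η + x * cm11 W η = 0 := by
    have : ∑ s, η s * (2 * (cs01 W s + x * cs11 W s)) = 2 * (cm01 W η + x * cm11 W η) := by
      simp only [cm01, cm11, Finset.mul_sum, ← Finset.sum_add_distrib]
      exact Finset.sum_congr rfl fun s _ => by ring
    linarith
  refine ⟨η, hη, ?_⟩
  rw [← qmean_eq_qstar hstat]
  exact (sum_mul_eq_iff_of_mem_stdSimplex hη hmm.1).mpr hsupp

theorem exists_pseudoSym_qstar_eq [Nontrivial (Fin t)] (hmm : IsMinimax (qpoly (t := t) W) x y) :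
    ∃ η : BlockArray a b t → ℝ, IsMeasure η ∧ PseudoSym W η ∧ qstar W η = y := by
  obtain ⟨η, hη, hq⟩ := exists_qstar_eq hmm
  exact ⟨symmetrize η, hη.symmetrize, pseudoSym_symmetrize W η, (qstar_symmetrize W η).trans hq⟩

theorem qstar_eq_iff [Nontrivial (Fin t)] (hW : W.PosSemidef) (hJW : Jmat (Plot a b) * W = 0)
    (hmm : IsMinimax (qpoly (t := t) W) x y) (hξ : IsMeasure ξ) (hps : PseudoSym W ξ) :
    qstar W ξ = y ↔
      cm01 W ξ + x * cm11 W ξ = 0 ∧ ∀ s, qpoly W s x ≠ y → ξ s = 0 := by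
  have hsupp : qmean W ξ x = y ↔ ∀ s, qpoly W s x ≠ y → ξ s = 0 :=
    sum_mul_eq_iff_of_mem_stdSimplex hξ hmm.1
  constructor
  · rintro rfl
    have hmean : qmean W ξ x = qstar W ξ :=
      (qmean_le hmm hξ).antisymm (qstar_le_qmean hW hJW hξ hps x)
    refine ⟨add_mul_eq_zero_of_forall_quadratic_le (c₀ := cm00 W ξ) fun z => ?_, hsupp.mp hmean⟩
    rw [← qmean_eq, ← qmean_eq, hmean]
    exact qstar_le_qmean hW hJW hξ hps z
  · rintro ⟨hstat, hzero⟩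
    rw [← qmean_eq_qstar hstat, hsupp.mpr hzero]

theorem GoodPhi.infoMat_le [Nontrivial (Fin t)] {Φ : Matrix (Fin t) (Fin t) ℝ → ℝ}
    (hΦ : GoodPhi t Φ) (hW : W.PosSemidef) (hJW : Jmat (Plot a b) * W = 0)
    (hmm : IsMinimax (qpoly (t := t) W) x y) (hη : IsMeasure η) {H : Matrix (Fin t) (Fin t) ℝ}
    (hH : IsGenInv (Cm11 W η) H) :
    Φ (InfoMat W η H) ≤ Φ ((y / (t - 1)) • Bmat (Fin t)) := by
  have htrace : (InfoMat W η H).trace ≤ y :=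
    (trace_infoMat_le_qmean hW hJW hη hH x).trans (qmean_le hmm hη)
  have hB : (Bmat (Fin t)).IsSymm := transpose_Bmat
  calc Φ (InfoMat W η H) ≤ Φ (permAvg (InfoMat W η H)) :=
        hΦ.le_permAvg (isSymm_infoMat hW hη hH)
    _ = Φ (((InfoMat W η H).trace / (t - 1)) • Bmat (Fin t)) := by
        rw [permAvg_eq_smul_Bmat (Jmat_mul_infoMat hJW η H)]
    _ ≤ Φ ((y / (t - 1)) • Bmat (Fin t)) := by
        refine hΦ.2.1 _ _ (hB.smul _) (hB.smul _) ?_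
        rw [← sub_smul, ← sub_div]
        exact posSemidef_Bmat.smul (div_nonneg (sub_nonneg.mpr htrace) natCast_sub_one_pos.le)

theorem univOptimal_iff_qstar_eq [Nontrivial (Fin t)] (hW : W.PosSemidef)
    (hJW : Jmat (Plot a b) * W = 0) (hmm : IsMinimax (qpoly (t := t) W) x y) (hξ : IsMeasure ξ)
    (hps : PseudoSym W ξ) : UnivOptimal W ξ ↔ qstar W ξ = y := by
  constructor
  · intro hopt
    refine le_antisymm ((qstar_le_qmean hW hJW hξ hps x).trans (qmean_le hmm hξ)) ?_
    obtain ⟨η, hη, hηps, rfl⟩ := exists_pseudoSym_qstar_eq hmm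
    obtain ⟨G, hG⟩ := exists_mul_mul_eq_self (Cm11 W ξ)
    obtain ⟨H, hH⟩ := exists_mul_mul_eq_self (Cm11 W η)
    rw [← trace_infoMat_of_pseudoSym hW hJW hη hηps hH,
      ← trace_infoMat_of_pseudoSym hW hJW hξ hps hG]
    exact hopt η hη G H hG hH _ goodPhi_trace
  · rintro rfl η hη G H hG hH Φ hΦ
    rw [infoMat_eq_of_pseudoSym hW hJW hξ hps hG]
    exact hΦ.infoMat_le hW hJW hmm hη hH

end Optimality

theorem posSemidef_Btilde {Sig : Matrix (Plot a b) (Plot a b) ℝ} (hSig : Sig.PosDef) :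
    (Btilde Sig).PosSemidef :=
  posSemidef_sub_smul_mul_Jmat_mul hSig.inv.posSemidef

theorem Jmat_mul_Btilde [Nonempty (Plot a b)] {Sig : Matrix (Plot a b) (Plot a b) ℝ}
    (hSig : Sig.PosDef) : Jmat (Plot a b) * Btilde Sig = 0 :=
  Jmat_mul_sub_smul_mul_Jmat_mul hSig.inv

open scoped Classical in
theorem pseudoSym_univOptimal_iff_linear_eq_general
    {a b t : ℕ} (ht : 2 ≤ t) {W : Matrix (Plot a b) (Plot a b) ℝ} (hW : W.PosSemidef)
    (hJW : Jmat (Plot a b) * W = 0) {xstar ystar : ℝ}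
    (hx : ∀ y : ℝ, rfun t W xstar ≤ rfun t W y) (hy : ystar = rfun t W xstar)
    {ξ : BlockArray a b t → ℝ} (hξ : IsMeasure ξ) (hps : PseudoSym W ξ) :
    UnivOptimal W ξ ↔
      ((∑ s ∈ Finset.univ.filter (fun s : BlockArray a b t => qpoly W s xstar = ystar),
          ξ s * (cs01 W s + xstar * cs11 W s)) = 0 ∧
       ∀ s : BlockArray a b t, qpoly W s xstar ≠ ystar → ξ s = 0) := by
  have : Nontrivial (Fin t) := Fin.nontrivial_iff_two_le.mpr ht
  have hmm : IsMinimax (qpoly (t := t) W) xstar ystar := hy ▸ isMinimax_sSup_range hx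
  rw [univOptimal_iff_qstar_eq hW hJW hmm hξ hps, qstar_eq_iff hW hJW hmm hξ hps]
  refine and_congr_left fun hsupp => ?_
  rw [Finset.sum_filter_of_ne fun s _ hs => not_imp_comm.mp (hsupp s) (left_ne_zero_of_mul hs)]
  simp only [cm01, cm11, Finset.mul_sum, ← Finset.sum_add_distrib, mul_add, mul_left_comm xstar]

open scoped Classical in
/-- Theorem `corol`: a pseudo symmetric measure is universally optimal iff
`Σ_{s∈Q} p_s (c_{s01} + x* c_{s11}) = 0` and `p_s = 0` for `s ∉ Q`. -/
theorem pseudoSym_univOptimal_iff_linear_eq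
    (a b t : ℕ) (ha : 2 ≤ a) (hab : a ≤ b) (hb : 3 ≤ b) (ht : 2 ≤ t)
    (Sig : Matrix (Plot a b) (Plot a b) ℝ) (hSig : Sig.PosDef)
    (xstar ystar : ℝ)
    (hx : ∀ y : ℝ, rfun t (Btilde Sig) xstar ≤ rfun t (Btilde Sig) y)
    (hy : ystar = rfun t (Btilde Sig) xstar)
    (ξ : BlockArray a b t → ℝ) (hξ : IsMeasure ξ) (hps : PseudoSym (Btilde Sig) ξ) :
    UnivOptimal (Btilde Sig) ξ ↔
      ((∑ s ∈ Finset.univ.filter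
            (fun s : BlockArray a b t => qpoly (Btilde Sig) s xstar = ystar),
          ξ s * (cs01 (Btilde Sig) s + xstar * cs11 (Btilde Sig) s)) = 0 ∧
       ∀ s : BlockArray a b t, qpoly (Btilde Sig) s xstar ≠ ystar → ξ s = 0) := by
  have : Nonempty (Plot a b) := ⟨⟨⟨0, by lia⟩, ⟨0, by lia⟩⟩⟩
  exact pseudoSym_univOptimal_iff_linear_eq_general ht (posSemidef_Btilde hSig)
    (Jmat_mul_Btilde hSig) hx hy hξ hps

end TwoDim
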